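/- Let d ≥ 3 be an integer and u_⋆(x) = (1+|x|²)^{−(d−2)/2}. For every f in D^{1,2}(ℝ^d) satisfying the orthogonality conditions ∫_{ℝ^d} f u_⋆ (1+|x|²)^{−2} dx = 0, ∫_{ℝ^d} f (1−|x|²) u_⋆ (1+|x|²)^{−3} dx = 0, and ∫_{ℝ^d} f x_i u_⋆ (1+|x|²)^{−3} dx = 0 for all i = 1, …, d, one has ∫_{ℝ^d} |∇f|² dx ≥ (d+2)(d+4) ∫_{ℝ^d} f² (1+|x|²)^{−2} dx. -/

import Mathlib

open MeasureTheory Real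

noncomputable section

/-- Surface area of the unit sphere `𝕊^{d-1} ⊆ ℝ^d`. -/
def sphereArea (d : ℕ) : ℝ := 2 * Real.pi ^ ((d : ℝ) / 2) / Real.Gamma ((d : ℝ) / 2)

/-- Green function of `-Δ` on `ℝ^d`, `d ≥ 3`: `G_d(x) = |x|^{2-d} / ((d-2)|𝕊^{d-1}|)`. -/
def greenKernel (d : ℕ) (x : EuclideanSpace ℝ (Fin d)) : ℝ :=
  ‖x‖ ^ ((2 : ℝ) - d) / (((d : ℝ) - 2) * sphereArea d)

/-- `(−Δ)⁻¹ v`, the convolution of `v` with the Green function of `-Δ` on `ℝ^d`. -/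
def invLap (d : ℕ) (v : EuclideanSpace ℝ (Fin d) → ℝ) (x : EuclideanSpace ℝ (Fin d)) : ℝ :=
  ∫ y, greenKernel d (x - y) * v y

/-- The Aubin–Talenti (optimal Sobolev) constant
`S_d = (1/(π d (d−2))) (Γ(d)/Γ(d/2))^{2/d}`. -/
def sobolevConst (d : ℕ) : ℝ :=
  1 / (Real.pi * d * ((d : ℝ) - 2)) *
    (Real.Gamma (d : ℝ) / Real.Gamma ((d : ℝ) / 2)) ^ ((2 : ℝ) / (d : ℝ))

/-- Membership in `D^{1,2}(ℝ^d)`: a (weakly) differentiable function with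
`∇u ∈ L²` and `u ∈ L^{2*}`, `2* = 2d/(d-2)`. -/
def MemD12 (d : ℕ) (u : EuclideanSpace ℝ (Fin d) → ℝ) : Prop :=
  Differentiable ℝ u ∧
  Integrable (fun x => ‖gradient u x‖ ^ 2) ∧
  Integrable (fun x => |u x| ^ (2 * (d : ℝ) / ((d : ℝ) - 2)))

/-- The `L^p` norm of `u`, written with real exponents: `(∫ |u|^p)^{1/p}`. -/
def lpNorm' {d : ℕ} (p : ℝ) (u : EuclideanSpace ℝ (Fin d) → ℝ) : ℝ :=
  (∫ x, |u x| ^ p) ^ (1 / p)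

/-- The Laplacian `Δu = ∑ ∂²u/∂x_i²`. -/
def lap (d : ℕ) (u : EuclideanSpace ℝ (Fin d) → ℝ) (x : EuclideanSpace ℝ (Fin d)) : ℝ :=
  ∑ i : Fin d, iteratedFDeriv ℝ 2 u x ![EuclideanSpace.single i 1, EuclideanSpace.single i 1]

/-- The Aubin–Talenti extremal function `u_⋆(x) = (1+|x|²)^{−(d−2)/2}`. -/
def uAT (d : ℕ) (x : EuclideanSpace ℝ (Fin d)) : ℝ :=
  (1 + ‖x‖ ^ 2) ^ (-(((d : ℝ) - 2) / 2))

/-- `f_i(x) = x_i u_⋆(x)/(1+|x|²)`, `i = 1, …, d`. -/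
def atFi (d : ℕ) (i : Fin d) (x : EuclideanSpace ℝ (Fin d)) : ℝ :=
  x i * uAT d x / (1 + ‖x‖ ^ 2)

/-- `f_{d+1}(x) = (1−|x|²) u_⋆(x)/(1+|x|²)`. -/
def atFlast (d : ℕ) (x : EuclideanSpace ℝ (Fin d)) : ℝ :=
  (1 - ‖x‖ ^ 2) * uAT d x / (1 + ‖x‖ ^ 2)

/-- Orthogonality, in `L²(ℝ^d, (1+|x|²)^{−2} dx)`, to `f_0 = u_⋆`, `f_1, …, f_d` and
`f_{d+1}`. -/
def orthAT (d : ℕ) (f : EuclideanSpace ℝ (Fin d) → ℝ) : Prop :=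
  (∫ x, f x * uAT d x / (1 + ‖x‖ ^ 2) ^ 2) = 0 ∧
  (∀ i : Fin d, (∫ x, f x * atFi d i x / (1 + ‖x‖ ^ 2) ^ 2) = 0) ∧
  (∫ x, f x * atFlast d x / (1 + ‖x‖ ^ 2) ^ 2) = 0

/-- The quadratic form `F`, the second-order expansion of the Sobolev deficit
around the Aubin–Talenti function. -/
def quadF (d : ℕ) (f : EuclideanSpace ℝ (Fin d) → ℝ) : ℝ :=
  (∫ x, ‖gradient f x‖ ^ 2) -
    (d : ℝ) * ((d : ℝ) + 2) * ∫ x, f x ^ 2 / (1 + ‖x‖ ^ 2) ^ 2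

/-- The quadratic form `G`, the second-order expansion of the Hardy-Littlewood-Sobolev
deficit around the Aubin–Talenti function. -/
def quadG (d : ℕ) (f : EuclideanSpace ℝ (Fin d) → ℝ) : ℝ :=
  1 / ((d : ℝ) * ((d : ℝ) + 2)) * (∫ x, f x ^ 2 / (1 + ‖x‖ ^ 2) ^ 2) -
    ∫ x, f x / (1 + ‖x‖ ^ 2) ^ 2 *
      invLap d (fun y => f y / (1 + ‖y‖ ^ 2) ^ 2) x

/-- the weight -/
def qq {d : ℕ} (x : EuclideanSpace ℝ (Fin d)) : ℝ := 1 + ‖x‖ ^ 2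

def vv {d : ℕ} (x : EuclideanSpace ℝ (Fin d)) : ℝ := qq x ^ (-((d : ℝ) / 2))

def ei {d : ℕ} (i : Fin d) : EuclideanSpace ℝ (Fin d) := EuclideanSpace.single i (1 : ℝ)

def sfun {d : ℕ} (α : ℝ) (b x : EuclideanSpace ℝ (Fin d)) : ℝ :=
  -α + 2 * (α + inner ℝ b x) / qq x

def mm {d : ℕ} (α : ℝ) (b : EuclideanSpace ℝ (Fin d)) (i : Fin d)
    (x : EuclideanSpace ℝ (Fin d)) : ℝ := b i - x i * (sfun α b x + α)

def phi {d : ℕ} (g : Polynomial ℝ) (α : ℝ) (b x : EuclideanSpace ℝ (Fin d)) : ℝ :=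
  qq x * vv x * g.eval (sfun α b x)

def Xphi {d : ℕ} (g : Polynomial ℝ) (α : ℝ) (b : EuclideanSpace ℝ (Fin d)) (i : Fin d)
    (x : EuclideanSpace ℝ (Fin d)) : ℝ :=
  vv x * (-((d : ℝ) - 2) * x i * g.eval (sfun α b x)
    + 2 * g.derivative.eval (sfun α b x) * mm α b i x)

def Yphi {d : ℕ} (g : Polynomial ℝ) (α : ℝ) (b : EuclideanSpace ℝ (Fin d)) (i : Fin d)
    (x : EuclideanSpace ℝ (Fin d)) : ℝ :=
  (-(d : ℝ) * x i * vv x / qq x) * (-((d : ℝ) - 2) * x i * g.eval (sfun α b x)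
    + 2 * g.derivative.eval (sfun α b x) * mm α b i x) +
  vv x * (-((d : ℝ) - 2) * g.eval (sfun α b x)
    - ((d : ℝ) - 2) * x i * (g.derivative.eval (sfun α b x) * (2 * mm α b i x / qq x))
    + 2 * (g.derivative.derivative.eval (sfun α b x) * (2 * mm α b i x / qq x)) * mm α b i x
    + 2 * g.derivative.eval (sfun α b x) *
      (-(sfun α b x + α) - x i * (2 * mm α b i x / qq x)))

section basic
variable {d : ℕ}

lemma qq_pos (x : EuclideanSpace ℝ (Fin d)) : 0 < qq x := by unfold qq; positivity

lemma one_le_qq (x : EuclideanSpace ℝ (Fin d)) : 1 ≤ qq x := by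
  unfold qq; nlinarith [sq_nonneg ‖x‖]

lemma vv_pos (x : EuclideanSpace ℝ (Fin d)) : 0 < vv x := Real.rpow_pos_of_pos (qq_pos x) _

lemma uAT_eq (x : EuclideanSpace ℝ (Fin d)) : uAT d x = qq x * vv x := by
  have h := Real.rpow_add (qq_pos x) 1 (-((d : ℝ) / 2))
  rw [Real.rpow_one] at h
  rw [vv, ← h, uAT, qq]
  congr 1; ring

lemma cont_qq : Continuous (qq (d := d)) := by unfold qq; fun_prop

lemma cont_vv : Continuous (vv (d := d)) := by
  unfold vv
  exact cont_qq.rpow_const (fun x => Or.inl (qq_pos x).ne')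

lemma cont_sfun (α : ℝ) (b : EuclideanSpace ℝ (Fin d)) : Continuous (sfun α b) := by
  unfold sfun
  exact continuous_const.add (Continuous.div (by fun_prop) cont_qq (fun x => (qq_pos x).ne'))

lemma cont_mm (α : ℝ) (b : EuclideanSpace ℝ (Fin d)) (i) : Continuous (mm α b i) := by
  unfold mm
  have := cont_sfun α b
  fun_prop

lemma cont_phi (g : Polynomial ℝ) (α : ℝ) (b : EuclideanSpace ℝ (Fin d)) :
    Continuous (phi g α b) := by
  unfold phi
  have := cont_sfun α b
  have := cont_qq (d := d)
  have := cont_vv (d := d)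
  fun_prop

lemma cont_Xphi (g : Polynomial ℝ) (α : ℝ) (b : EuclideanSpace ℝ (Fin d)) (i) :
    Continuous (Xphi g α b i) := by
  unfold Xphi
  have := cont_sfun α b
  have := cont_mm α b i
  have := cont_vv (d := d)
  fun_prop

lemma cont_Yphi (g : Polynomial ℝ) (α : ℝ) (b : EuclideanSpace ℝ (Fin d)) (i) :
    Continuous (Yphi g α b i) := by
  unfold Yphi
  have := cont_sfun α b
  have := cont_mm α b i
  have := cont_vv (d := d)
  have := cont_qq (d := d)
  have h (x : EuclideanSpace ℝ (Fin d)) : qq x ≠ 0 := (qq_pos x).ne'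
  fun_prop (disch := exact h _)

lemma sum_mm_sq (α : ℝ) (b x : EuclideanSpace ℝ (Fin d)) :
    ∑ i, mm α b i x ^ 2 = α ^ 2 + ‖b‖ ^ 2 - sfun α b x ^ 2 := by
  have h1 : ‖x‖ ^ 2 = ∑ i, x i ^ 2 := by simp [EuclideanSpace.norm_sq_eq]
  have h2 : ‖b‖ ^ 2 = ∑ i, b i ^ 2 := by simp [EuclideanSpace.norm_sq_eq]
  have h3 : inner ℝ b x = ∑ i, b i * x i := by
    simp [PiLp.inner_apply, mul_comm]
  have h4 : ∑ i, mm α b i x ^ 2 = ‖b‖ ^ 2 - 2 * (sfun α b x + α) * inner ℝ b x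
      + (sfun α b x + α) ^ 2 * ‖x‖ ^ 2 := by
    rw [h1, h2, h3, Finset.mul_sum, Finset.mul_sum, ← Finset.sum_sub_distrib,
      ← Finset.sum_add_distrib]
    refine Finset.sum_congr rfl fun i _ => ?_
    unfold mm; ring
  rw [h4]
  have h5 : ‖x‖ ^ 2 = qq x - 1 := by unfold qq; ring
  have := (qq_pos x).ne'
  rw [h5]; unfold sfun
  field_simp
  ring

lemma sum_mm_x (α : ℝ) (b x : EuclideanSpace ℝ (Fin d)) :
    ∑ i, x i * mm α b i x = sfun α b x - qq x / 2 * (sfun α b x + α) := by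
  have h1 : ‖x‖ ^ 2 = ∑ i, x i ^ 2 := by simp [EuclideanSpace.norm_sq_eq]
  have h3 : inner ℝ b x = ∑ i, b i * x i := by
    simp [PiLp.inner_apply, mul_comm]
  have h4 : ∑ i, x i * mm α b i x = inner ℝ b x - (sfun α b x + α) * ‖x‖ ^ 2 := by
    rw [h1, h3, Finset.mul_sum, ← Finset.sum_sub_distrib]
    refine Finset.sum_congr rfl fun i _ => ?_
    unfold mm; ring
  rw [h4]
  have h5 : ‖x‖ ^ 2 = qq x - 1 := by unfold qq; ring
  have := (qq_pos x).ne'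
  rw [h5]; unfold sfun
  field_simp
  ring

/-- The one-variable Gegenbauer-type operator. -/
def TT (d : ℕ) (N : ℝ) (g : Polynomial ℝ) : Polynomial ℝ :=
  Polynomial.C (d : ℝ) * Polynomial.X * g.derivative
    - (Polynomial.C N - Polynomial.X ^ 2) * g.derivative.derivative

def mu (d k : ℕ) : ℝ := (k : ℝ) * ((k : ℝ) + d - 1)

def lam (d k : ℕ) : ℝ := 4 * mu d k + (d : ℝ) * ((d : ℝ) - 2)

lemma sum_Yphi (g : Polynomial ℝ) (α : ℝ) (b x : EuclideanSpace ℝ (Fin d)) (k : ℕ)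
    (hg : TT d (α ^ 2 + ‖b‖ ^ 2) g = Polynomial.C (mu d k) * g) :
    ∑ i, Yphi g α b i x = - (lam d k * phi g α b x / qq x ^ 2) := by
  have h0 : ‖x‖ ^ 2 = ∑ i, x i ^ 2 := by simp [EuclideanSpace.norm_sq_eq]
  have h1 := sum_mm_sq α b x
  have h2 := sum_mm_x α b x
  have hT := congrArg (Polynomial.eval (sfun α b x)) hg
  simp only [TT, Polynomial.eval_sub, Polynomial.eval_mul, Polynomial.eval_C, Polynomial.eval_X,
    Polynomial.eval_pow] at hT
  set s := sfun α b x with hs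
  set G0 := g.eval s
  set G1 := g.derivative.eval s
  set G2 := g.derivative.derivative.eval s
  have h5 : ‖x‖ ^ 2 = qq x - 1 := by unfold qq; ring
  have key : ∑ i, Yphi g α b i x =
      vv x * (d * (d - 2) * G0 / qq x) * (∑ i, x i ^ 2)
      + vv x * (-(2 * d * G1) / qq x - 2 * (d - 2) * G1 / qq x - 4 * G1 / qq x)
          * (∑ i, x i * mm α b i x)
      + vv x * (4 * G2 / qq x) * (∑ i, mm α b i x ^ 2)
      + d * (vv x * (-((d : ℝ) - 2) * G0 - 2 * G1 * (s + α))) := by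
    have hc : (d : ℝ) * (vv x * (-((d : ℝ) - 2) * G0 - 2 * G1 * (s + α))) =
        ∑ i : Fin d, (vv x * (-((d : ℝ) - 2) * G0 - 2 * G1 * (s + α))) := by simp
    rw [hc, Finset.mul_sum, Finset.mul_sum, Finset.mul_sum, ← Finset.sum_add_distrib,
      ← Finset.sum_add_distrib, ← Finset.sum_add_distrib]
    refine Finset.sum_congr rfl fun i _ => ?_
    unfold Yphi
    rw [← hs]
    ring
  rw [key, h1, h2, ← h0, h5]
  have := (qq_pos x).ne'
  unfold phi lam
  rw [← hs]
  field_simp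
  linear_combination (-8 * vv x) * hT

end basic

section derivs
variable {d : ℕ}

lemma line_coord (x : EuclideanSpace ℝ (Fin d)) (i : Fin d) :
    HasLineDerivAt ℝ (fun y : EuclideanSpace ℝ (Fin d) => y i) 1 x (ei i) := by
  have h : HasDerivAt (fun t : ℝ => x i + t * 1) 1 0 := by
    simpa using (hasDerivAt_id (0 : ℝ)).const_add (x i)
  have e : (fun t : ℝ => (x + t • ei i) i) = fun t : ℝ => x i + t * 1 := by
    funext t; simp [ei]
  change HasDerivAt (fun t : ℝ => (x + t • ei i) i) 1 0
  rw [e]; exact h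

lemma line_inner (b x : EuclideanSpace ℝ (Fin d)) (i : Fin d) :
    HasLineDerivAt ℝ (fun y : EuclideanSpace ℝ (Fin d) => inner ℝ b y) (b i) x (ei i) := by
  have h : HasDerivAt (fun t : ℝ => inner ℝ b x + t * b i) (b i) 0 := by
    simpa using ((hasDerivAt_id (0 : ℝ)).mul_const (b i)).const_add (inner ℝ b x)
  have e : (fun t : ℝ => inner ℝ b (x + t • ei i)) = fun t : ℝ => inner ℝ b x + t * b i := by
    funext t
    simp [ei, inner_add_right, inner_smul_right, EuclideanSpace.inner_single_right]
  change HasDerivAt (fun t : ℝ => inner ℝ b (x + t • ei i)) (b i) 0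
  rw [e]; exact h

lemma line_normsq (x : EuclideanSpace ℝ (Fin d)) (i : Fin d) :
    HasLineDerivAt ℝ (fun y : EuclideanSpace ℝ (Fin d) => ‖y‖ ^ 2) (2 * x i) x (ei i) := by
  have h : HasDerivAt (fun t : ℝ => ‖x‖ ^ 2 + (t * (2 * x i) + t ^ 2)) (2 * x i) 0 := by
    simpa using (((hasDerivAt_id (0 : ℝ)).mul_const (2 * x i)).add
      ((hasDerivAt_id (0 : ℝ)).pow 2)).const_add (‖x‖ ^ 2)
  have e : (fun t : ℝ => ‖x + t • ei i‖ ^ 2) = fun t : ℝ => ‖x‖ ^ 2 + (t * (2 * x i) + t ^ 2) := by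
    funext t
    rw [norm_add_sq_real]
    simp [ei, inner_smul_right, EuclideanSpace.inner_single_right, norm_smul, mul_pow]
    ring
  change HasDerivAt (fun t : ℝ => ‖x + t • ei i‖ ^ 2) (2 * x i) 0
  rw [e]; exact h

lemma line_qq (x : EuclideanSpace ℝ (Fin d)) (i : Fin d) :
    HasLineDerivAt ℝ qq (2 * x i) x (ei i) := by
  have h := line_normsq x i
  unfold HasLineDerivAt at *
  exact h.const_add 1

lemma line_vv (x : EuclideanSpace ℝ (Fin d)) (i : Fin d) :
    HasLineDerivAt ℝ vv (-(d : ℝ) * x i * vv x / qq x) x (ei i) := by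
  have h := line_qq x i
  unfold HasLineDerivAt at *
  have := h.rpow_const (p := -((d : ℝ) / 2)) (Or.inl (by simpa using (qq_pos x).ne'))
  refine this.congr_deriv ?_
  simp only [zero_smul, add_zero]
  rw [Real.rpow_sub_one (qq_pos x).ne']
  unfold vv
  ring

lemma line_sfun (α : ℝ) (b x : EuclideanSpace ℝ (Fin d)) (i : Fin d) :
    HasLineDerivAt ℝ (sfun α b) (2 * mm α b i x / qq x) x (ei i) := by
  have h := line_qq x i
  have h2 := line_inner b x i
  unfold HasLineDerivAt at *
  have := (((h2.const_add α).const_mul 2).div h (by simpa using (qq_pos x).ne')).const_add (-α)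
  refine this.congr_deriv ?_
  simp only [zero_smul, add_zero]
  unfold mm sfun
  have := (qq_pos x).ne'
  field_simp
  ring

lemma line_eval (g : Polynomial ℝ) (α : ℝ) (b x : EuclideanSpace ℝ (Fin d)) (i : Fin d) :
    HasLineDerivAt ℝ (fun y => g.eval (sfun α b y))
      (g.derivative.eval (sfun α b x) * (2 * mm α b i x / qq x)) x (ei i) := by
  have h := line_sfun α b x i
  unfold HasLineDerivAt at *
  have h2 := g.hasDerivAt (sfun α b x)
  have h3 : x = x + (0 : ℝ) • ei i := by simp
  rw [h3] at h2
  have := h2.comp (0 : ℝ) h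
  refine this.congr_deriv ?_
  simp only [zero_smul, add_zero]

lemma line_mm (α : ℝ) (b x : EuclideanSpace ℝ (Fin d)) (i : Fin d) :
    HasLineDerivAt ℝ (mm α b i) (-(sfun α b x + α) - x i * (2 * mm α b i x / qq x)) x (ei i) := by
  have h := line_sfun α b x i
  have h2 := line_coord x i
  unfold HasLineDerivAt at *
  have := (h2.mul (h.add_const α)).const_sub (b i)
  refine this.congr_deriv ?_
  simp only [zero_smul, add_zero]
  ring

lemma line_phi (g : Polynomial ℝ) (α : ℝ) (b x : EuclideanSpace ℝ (Fin d)) (i : Fin d) :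
    HasLineDerivAt ℝ (phi g α b) (Xphi g α b i x) x (ei i) := by
  have h1 := line_qq x i
  have h2 := line_vv x i
  have h3 := line_eval g α b x i
  unfold HasLineDerivAt at *
  have := (h1.mul h2).mul h3
  refine this.congr_deriv ?_
  simp only [zero_smul, add_zero]
  unfold Xphi
  have := (qq_pos x).ne'
  field_simp
  simp
  field_simp
  ring

lemma line_Xphi (g : Polynomial ℝ) (α : ℝ) (b x : EuclideanSpace ℝ (Fin d)) (i : Fin d) :
    HasLineDerivAt ℝ (Xphi g α b i) (Yphi g α b i x) x (ei i) := by
  have h1 := line_coord x i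
  have h2 := line_vv x i
  have h3 := line_eval g α b x i
  have h4 := line_eval g.derivative α b x i
  have h5 := line_mm α b x i
  unfold HasLineDerivAt at *
  have := h2.mul (((h1.const_mul (-((d : ℝ) - 2))).mul h3).add ((h4.const_mul 2).mul h5))
  refine this.congr_deriv ?_
  simp only [zero_smul, add_zero]
  unfold Yphi
  simp only [Pi.add_apply, Pi.mul_apply, zero_smul, add_zero]
  ring

lemma diff_qq : Differentiable ℝ (qq (d := d)) := by
  unfold qq
  exact (differentiable_id.norm_sq ℝ).const_add 1

lemma diff_vv : Differentiable ℝ (vv (d := d)) := by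
  unfold vv
  exact diff_qq.rpow_const (fun x => Or.inl (qq_pos x).ne')

lemma diff_sfun (α : ℝ) (b : EuclideanSpace ℝ (Fin d)) : Differentiable ℝ (sfun α b) := by
  unfold sfun
  have h (x : EuclideanSpace ℝ (Fin d)) : qq x ≠ 0 := (qq_pos x).ne'
  have := diff_qq (d := d)
  simp only [div_eq_mul_inv]
  refine (Differentiable.mul ?_ (this.inv h)).const_add _
  exact (((innerSL ℝ b).differentiable).const_add α).const_mul 2

lemma diff_phi (g : Polynomial ℝ) (α : ℝ) (b : EuclideanSpace ℝ (Fin d)) :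
    Differentiable ℝ (phi g α b) := by
  unfold phi
  exact (diff_qq.mul diff_vv).mul (g.differentiable.comp (diff_sfun α b))

lemma fderiv_phi (g : Polynomial ℝ) (α : ℝ) (b x : EuclideanSpace ℝ (Fin d)) (i : Fin d) :
    fderiv ℝ (phi g α b) x (ei i) = Xphi g α b i x :=
  HasLineDerivAt.unique ((diff_phi g α b x).hasFDerivAt.hasLineDerivAt (ei i)) (line_phi g α b x i)

end derivs

section decay
variable {d : ℕ}

lemma integrable_qq_rpow {r : ℝ} (hr : (d : ℝ) < 2 * r) :
    Integrable (fun x : EuclideanSpace ℝ (Fin d) => qq x ^ (-r)) := by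
  have := integrable_rpow_neg_one_add_norm_sq (E := EuclideanSpace ℝ (Fin d)) (r := 2 * r)
    (μ := volume) (by simpa using hr)
  refine this.congr (Filter.Eventually.of_forall fun x => ?_)
  simp only [qq]
  congr 1
  ring

lemma integrable_of_decay {F : EuclideanSpace ℝ (Fin d) → ℝ} (hF : AEStronglyMeasurable F volume)
    {r C : ℝ} (hr : (d : ℝ) < 2 * r) (h : ∀ x, |F x| ≤ C * qq x ^ (-r)) : Integrable F :=
  ((integrable_qq_rpow hr).const_mul C).mono' hF (Filter.Eventually.of_forall h)

lemma vv_sq (x : EuclideanSpace ℝ (Fin d)) : vv x ^ 2 = qq x ^ (-(d : ℝ)) := by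
  unfold vv
  rw [← Real.rpow_natCast, ← Real.rpow_mul (qq_pos x).le]
  congr 1; push_cast; ring

lemma memLp_vv (hd : 3 ≤ d) : MemLp (vv (d := d)) 2 volume := by
  rw [memLp_two_iff_integrable_sq cont_vv.aestronglyMeasurable]
  simp only [vv_sq]
  apply integrable_qq_rpow
  have : (3 : ℝ) ≤ d := by exact_mod_cast hd
  linarith

lemma integrable_vv_sq_qq (hd : 3 ≤ d) : 
    Integrable (fun x : EuclideanSpace ℝ (Fin d) => vv x ^ 2 * qq x) := by
  have h3 : (3 : ℝ) ≤ d := by exact_mod_cast hd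
  have := integrable_qq_rpow (d := d) (r := (d : ℝ) - 1) (by linarith)
  refine this.congr (Filter.Eventually.of_forall fun x => ?_)
  simp only [vv_sq]
  rw [← Real.rpow_add_one (qq_pos x).ne']
  congr 1; ring

lemma memLp_of_bound (hd : 3 ≤ d) {F : EuclideanSpace ℝ (Fin d) → ℝ}
    (hF : AEStronglyMeasurable F volume) {C : ℝ} (h : ∀ x, |F x| ≤ C * (vv x * √(qq x))) :
    MemLp F 2 volume := by
  rw [memLp_two_iff_integrable_sq hF]
  refine ((integrable_vv_sq_qq hd).const_mul (C ^ 2)).mono' (hF.pow 2)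
    (Filter.Eventually.of_forall fun x => ?_)
  have := h x
  rw [Real.norm_eq_abs, abs_pow]
  calc |F x| ^ 2 ≤ (C * (vv x * √(qq x))) ^ 2 := by gcongr
    _ = _ := by rw [mul_pow, mul_pow, Real.sq_sqrt (qq_pos x).le]

/-- admissible functions -/
structure Adm (f : EuclideanSpace ℝ (Fin d) → ℝ) : Prop where
  diff : Differentiable ℝ f
  grad : ∀ i, MemLp (fun x => fderiv ℝ f x (ei i)) 2 volume
  l2 : MemLp (fun x => f x / qq x) 2 volume
  l1 : Integrable (fun x => f x * vv x)

def cut (d : ℕ) (ε : ℝ) (x : EuclideanSpace ℝ (Fin d)) : ℝ := (1 + ε * ‖x‖ ^ 2)⁻¹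

def dcut (ε : ℝ) (i : Fin d) (x : EuclideanSpace ℝ (Fin d)) : ℝ :=
  -(ε * (2 * x i)) / (1 + ε * ‖x‖ ^ 2) ^ 2

lemma line_cut (ε : ℝ) (hε : 0 ≤ ε) (x : EuclideanSpace ℝ (Fin d)) (i : Fin d) :
    HasLineDerivAt ℝ (cut d ε) (dcut ε i x) x (ei i) := by
  have h := line_normsq x i
  unfold HasLineDerivAt at *
  have h2 : 1 + ε * ‖x + (0 : ℝ) • ei i‖ ^ 2 ≠ 0 := by positivity
  have := ((h.const_mul ε).const_add 1).inv h2
  refine this.congr_deriv ?_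
  simp only [zero_smul, add_zero, dcut]

lemma cont_cut (ε : ℝ) (hε : 0 ≤ ε) : Continuous (cut d ε) := by
  unfold cut
  have (x : EuclideanSpace ℝ (Fin d)) : 1 + ε * ‖x‖ ^ 2 ≠ 0 := by positivity
  fun_prop (disch := exact this _)

lemma cont_dcut (ε : ℝ) (hε : 0 ≤ ε) (i : Fin d) : Continuous (dcut ε i) := by
  unfold dcut
  have (x : EuclideanSpace ℝ (Fin d)) : (1 + ε * ‖x‖ ^ 2) ^ 2 ≠ 0 := by positivity
  fun_prop (disch := exact this _)

lemma abs_coord_le (x : EuclideanSpace ℝ (Fin d)) (i : Fin d) : |x i| ≤ √(qq x) := by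
  apply Real.abs_le_sqrt
  have : |x i| ≤ ‖x‖ := by simpa using PiLp.norm_apply_le x i
  have h2 : x i ^ 2 ≤ ‖x‖ ^ 2 := by rw [← sq_abs]; gcongr
  unfold qq; linarith

lemma cut_nonneg (ε : ℝ) (hε : 0 ≤ ε) (x : EuclideanSpace ℝ (Fin d)) : 0 ≤ cut d ε x := by
  unfold cut; positivity

lemma cut_le_one (ε : ℝ) (hε : 0 ≤ ε) (x : EuclideanSpace ℝ (Fin d)) : cut d ε x ≤ 1 := by
  unfold cut
  apply inv_le_one_of_one_le₀
  have : 0 ≤ ε * ‖x‖ ^ 2 := by positivity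
  linarith

lemma cut_qq_le (ε : ℝ) (hε : 0 < ε) (hε1 : ε ≤ 1) (x : EuclideanSpace ℝ (Fin d)) :
    ε * (cut d ε x * qq x) ≤ 1 := by
  have h1 : 0 < 1 + ε * ‖x‖ ^ 2 := by positivity
  have : cut d ε x * (1 + ε * ‖x‖ ^ 2) = 1 := by
    unfold cut; field_simp
  have h2 := cut_nonneg ε hε.le x
  unfold qq
  nlinarith

lemma sqrt_qq_le (x : EuclideanSpace ℝ (Fin d)) : √(qq x) ≤ qq x := by
  have := one_le_qq x
  rw [Real.sqrt_le_left (by linarith)]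
  nlinarith

lemma abs_dcut_le (ε : ℝ) (hε : 0 < ε) (hε1 : ε ≤ 1) (i : Fin d)
    (x : EuclideanSpace ℝ (Fin d)) : |dcut ε i x| * √(qq x) ≤ 2 := by
  have h0 := abs_coord_le x i
  have h1 := cut_qq_le ε hε hε1 x
  have h2 := cut_le_one ε hε.le x
  have h3 := cut_nonneg ε hε.le x
  have h4 : |dcut ε i x| = ε * cut d ε x * cut d ε x * 2 * |x i| := by
    unfold dcut cut
    rw [abs_div, abs_neg, abs_mul, abs_mul, abs_of_pos hε, abs_of_pos (by positivity : 0 < (1 + ε * ‖x‖ ^ 2) ^ 2)]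
    simp; field_simp
  rw [h4]
  have h5 : |x i| * √(qq x) ≤ qq x := by
    calc _ ≤ √(qq x) * √(qq x) := by gcongr
      _ = _ := Real.mul_self_sqrt (qq_pos x).le
  calc ε * cut d ε x * cut d ε x * 2 * |x i| * √(qq x)
      = (ε * cut d ε x * 2 * (|x i| * √(qq x))) * cut d ε x := by ring
    _ ≤ (ε * cut d ε x * 2 * qq x) * 1 := by
        have := qq_pos x
        gcongr
    _ ≤ 2 := by linarith

/-- Integration by parts against decaying vector fields. -/
lemma ibp (hd : 3 ≤ d) {f : EuclideanSpace ℝ (Fin d) → ℝ} (hf : Adm f) (i : Fin d)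
    {X Y : EuclideanSpace ℝ (Fin d) → ℝ} (cX : Continuous X) (cY : Continuous Y)
    (hXY : ∀ x, HasLineDerivAt ℝ X (Y x) x (ei i)) {C : ℝ}
    (bX : ∀ x, |X x| ≤ C * (vv x * √(qq x))) (bY : ∀ x, |Y x| ≤ C * vv x) :
    (∫ x, fderiv ℝ f x (ei i) * X x) = - ∫ x, f x * Y x := by
  have cf := hf.diff.continuous
  have mX := memLp_of_bound hd cX.aestronglyMeasurable bX
  have hdX : Integrable (fun x => fderiv ℝ f x (ei i) * X x) := (hf.grad i).integrable_mul mX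
  have hfv := hf.l1.norm
  have C0 : 0 ≤ C := by
    have := (abs_nonneg _).trans (bY 0)
    exact nonneg_of_mul_nonneg_left this (vv_pos _)
  have hfY : Integrable (fun x => f x * Y x) := by
    refine (hfv.const_mul C).mono' (cf.mul cY).aestronglyMeasurable
      (Filter.Eventually.of_forall fun x => ?_)
    rw [norm_mul, norm_mul, Real.norm_eq_abs (Y x), Real.norm_of_nonneg (vv_pos x).le]
    calc _ ≤ ‖f x‖ * (C * vv x) := by gcongr; exact bY x
      _ = _ := by ring
  let ε : ℕ → ℝ := fun n => 1 / ((n : ℝ) + 1)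
  have hε0 (n) : 0 < ε n := Nat.one_div_pos_of_nat
  have hε1 (n) : ε n ≤ 1 := by
    simp only [ε]
    rw [div_le_one (by positivity)]
    linarith [Nat.cast_nonneg (α := ℝ) n]
  have hεt : Filter.Tendsto ε Filter.atTop (nhds 0) := tendsto_one_div_add_atTop_nhds_zero_nat
  -- bounds
  have bd1 (n) : ∀ x, ‖f x * (dcut (ε n) i x * X x)‖ ≤ 2 * C * ‖f x * vv x‖ := by
    intro x
    have h1 := abs_dcut_le (ε n) (hε0 n) (hε1 n) i x
    have h2 := bX x
    rw [norm_mul, norm_mul, norm_mul, Real.norm_eq_abs (X x), Real.norm_of_nonneg (vv_pos x).le, 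
      Real.norm_eq_abs (dcut _ _ _)]
    have := vv_pos x
    calc _ ≤ ‖f x‖ * (|dcut (ε n) i x| * (C * (vv x * √(qq x)))) := by gcongr
      _ = ‖f x‖ * ((|dcut (ε n) i x| * √(qq x)) * (C * vv x)) := by ring
      _ ≤ ‖f x‖ * (2 * (C * vv x)) := by gcongr
      _ = _ := by ring
  have bd2 (n) : ∀ x, ‖f x * (cut d (ε n) x * Y x)‖ ≤ C * ‖f x * vv x‖ := by
    intro x
    have h1 := cut_nonneg (ε n) (hε0 n).le x
    have h1' := cut_le_one (ε n) (hε0 n).le x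
    have h2 := bY x
    rw [norm_mul, norm_mul, norm_mul, Real.norm_eq_abs (Y x), Real.norm_of_nonneg (vv_pos x).le, 
      Real.norm_of_nonneg h1]
    have := vv_pos x
    calc _ ≤ ‖f x‖ * (1 * (C * vv x)) := by gcongr
      _ = _ := by ring
  have bd3 (n) : ∀ x, ‖fderiv ℝ f x (ei i) * (cut d (ε n) x * X x)‖ ≤
      ‖fderiv ℝ f x (ei i) * X x‖ := by
    intro x
    have h1 := cut_nonneg (ε n) (hε0 n).le x
    have h1' := cut_le_one (ε n) (hε0 n).le x
    rw [norm_mul, norm_mul, norm_mul, Real.norm_of_nonneg h1]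
    calc _ ≤ ‖fderiv ℝ f x (ei i)‖ * (1 * ‖X x‖) := by gcongr
      _ = _ := by ring
  have mder : AEStronglyMeasurable (fun x => fderiv ℝ f x (ei i)) volume := 
    (hf.grad i).aestronglyMeasurable
  have cc (n) := cont_cut (d := d) (ε n) (hε0 n).le
  have cdc (n) := cont_dcut (d := d) (ε n) (hε0 n).le i
  have m1 (n) : AEStronglyMeasurable (fun x => f x * (dcut (ε n) i x * X x)) volume :=
    (cf.mul ((cdc n).mul cX)).aestronglyMeasurable
  have m2 (n) : AEStronglyMeasurable (fun x => f x * (cut d (ε n) x * Y x)) volume :=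
    (cf.mul ((cc n).mul cY)).aestronglyMeasurable
  have m3 (n) : AEStronglyMeasurable (fun x => fderiv ℝ f x (ei i) * (cut d (ε n) x * X x)) volume :=
    mder.mul ((cc n).mul cX).aestronglyMeasurable
  have i1 (n) : Integrable (fun x => f x * (dcut (ε n) i x * X x)) :=
    (hfv.const_mul (2 * C)).mono' (m1 n) (Filter.Eventually.of_forall (bd1 n))
  have i2 (n) : Integrable (fun x => f x * (cut d (ε n) x * Y x)) :=
    (hfv.const_mul C).mono' (m2 n) (Filter.Eventually.of_forall (bd2 n))
  have i3 (n) : Integrable (fun x => fderiv ℝ f x (ei i) * (cut d (ε n) x * X x)) :=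
    hdX.norm.mono' (m3 n) (Filter.Eventually.of_forall (bd3 n))
  have i4 (n) : Integrable (fun x => f x * (cut d (ε n) x * X x)) := by
    refine (hfv.const_mul (C / ε n)).mono' (cf.mul ((cc n).mul cX)).aestronglyMeasurable
      (Filter.Eventually.of_forall fun x => ?_)
    have h1 := cut_nonneg (ε n) (hε0 n).le x
    have h1' := cut_qq_le (ε n) (hε0 n) (hε1 n) x
    have h2 := bX x
    rw [norm_mul, norm_mul, norm_mul, Real.norm_eq_abs (X x), Real.norm_of_nonneg (vv_pos x).le, 
      Real.norm_of_nonneg h1]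
    have := vv_pos x
    have := sqrt_qq_le x
    have h5 : cut d (ε n) x * qq x ≤ 1 / ε n := by
      rw [le_div_iff₀ (hε0 n)]; linarith
    calc _ ≤ ‖f x‖ * (cut d (ε n) x * (C * (vv x * √(qq x)))) := by gcongr
      _ ≤ ‖f x‖ * (cut d (ε n) x * (C * (vv x * qq x))) := by gcongr
      _ = ‖f x‖ * ((cut d (ε n) x * qq x) * (C * vv x)) := by ring
      _ ≤ ‖f x‖ * ((1 / ε n) * (C * vv x)) := by gcongr
      _ = _ := by ring
  have key (n) : (∫ x, fderiv ℝ f x (ei i) * (cut d (ε n) x * X x)) =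
      - ((∫ x, f x * (dcut (ε n) i x * X x)) + ∫ x, f x * (cut d (ε n) x * Y x)) := by
    rw [← integral_add (i1 n) (i2 n)]
    have hsum : Integrable (fun x => f x * (dcut (ε n) i x * X x + cut d (ε n) x * Y x)) := by
      refine ((i1 n).add (i2 n)).congr (Filter.Eventually.of_forall fun x => ?_)
      simp only [Pi.add_apply]; ring
    have := integral_bilinear_hasLineDerivAt_right_eq_neg_left_of_integrable (μ := volume)
      (f := f) (f' := fun x => fderiv ℝ f x (ei i)) (g := fun x => cut d (ε n) x * X x)
      (g' := fun x => dcut (ε n) i x * X x + cut d (ε n) x * Y x) (v := ei i)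
      (B := ContinuousLinearMap.mul ℝ ℝ) (i3 n) hsum (i4 n)
      (fun x _ => (hf.diff x).hasFDerivAt.hasLineDerivAt _) (fun x _ => by
        have h1 := line_cut (ε n) (hε0 n).le x i
        have h2 := hXY x
        unfold HasLineDerivAt at *
        refine (h1.mul h2).congr_deriv ?_
        simp only [zero_smul, add_zero])
    simp only [ContinuousLinearMap.mul_apply'] at this
    rw [← neg_eq_iff_eq_neg, ← this]
    refine integral_congr_ae (Filter.Eventually.of_forall fun x => ?_)
    simp only; ring
  have tcut (x : EuclideanSpace ℝ (Fin d)) :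
      Filter.Tendsto (fun n => cut d (ε n) x) Filter.atTop (nhds 1) := by
    unfold cut
    have : Filter.Tendsto (fun n => (1 + ε n * ‖x‖ ^ 2)⁻¹) Filter.atTop
      (nhds (1 + 0 * ‖x‖ ^ 2)⁻¹) :=
      ((hεt.mul_const _).const_add 1).inv₀ (by norm_num)
    simpa using this
  have tdcut (x : EuclideanSpace ℝ (Fin d)) :
      Filter.Tendsto (fun n => dcut (ε n) i x) Filter.atTop (nhds 0) := by
    unfold dcut
    have : Filter.Tendsto (fun n => -(ε n * (2 * x i)) / (1 + ε n * ‖x‖ ^ 2) ^ 2) Filter.atTop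
      (nhds (-(0 * (2 * x i)) / (1 + 0 * ‖x‖ ^ 2) ^ 2)) :=
      ((hεt.mul_const _).neg).div (((hεt.mul_const _).const_add 1).pow 2) (by norm_num)
    simpa using this
  have t1 : Filter.Tendsto (fun n => ∫ x, f x * (dcut (ε n) i x * X x)) Filter.atTop
      (nhds (∫ x, f x * (0 * X x))) :=
    tendsto_integral_of_dominated_convergence _ m1 (hfv.const_mul (2 * C))
      (fun n => Filter.Eventually.of_forall (bd1 n))
      (Filter.Eventually.of_forall fun x => ((tdcut x).mul_const _).const_mul _)
  have t2 : Filter.Tendsto (fun n => ∫ x, f x * (cut d (ε n) x * Y x)) Filter.atTop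
      (nhds (∫ x, f x * (1 * Y x))) :=
    tendsto_integral_of_dominated_convergence _ m2 (hfv.const_mul C)
      (fun n => Filter.Eventually.of_forall (bd2 n))
      (Filter.Eventually.of_forall fun x => ((tcut x).mul_const _).const_mul _)
  have t3 : Filter.Tendsto (fun n => ∫ x, fderiv ℝ f x (ei i) * (cut d (ε n) x * X x)) Filter.atTop
      (nhds (∫ x, fderiv ℝ f x (ei i) * (1 * X x))) :=
    tendsto_integral_of_dominated_convergence _ m3 hdX.norm
      (fun n => Filter.Eventually.of_forall (bd3 n))
      (Filter.Eventually.of_forall fun x => ((tcut x).mul_const _).const_mul _)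
  simp only [key] at t3
  have := tendsto_nhds_unique t3 (t1.add t2).neg
  simpa using this

end decay

section eigen
variable {d : ℕ}

lemma sfun_abs_le (α : ℝ) (b x : EuclideanSpace ℝ (Fin d)) :
    |sfun α b x| ≤ √(α ^ 2 + ‖b‖ ^ 2) := by
  apply Real.abs_le_sqrt
  have h := sum_mm_sq α b x
  have : 0 ≤ ∑ i, mm α b i x ^ 2 := Finset.sum_nonneg fun i _ => sq_nonneg _
  linarith

lemma mm_abs_le (α : ℝ) (b x : EuclideanSpace ℝ (Fin d)) (i : Fin d) :
    |mm α b i x| ≤ √(α ^ 2 + ‖b‖ ^ 2) := by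
  apply Real.abs_le_sqrt
  have h := sum_mm_sq α b x
  have := Finset.single_le_sum (f := fun i => mm α b i x ^ 2) (fun i _ => sq_nonneg _)
    (Finset.mem_univ i)
  nlinarith [sq_nonneg (sfun α b x)]

lemma eval_bound (g : Polynomial ℝ) (α : ℝ) (b : EuclideanSpace ℝ (Fin d)) :
    ∃ C, 0 ≤ C ∧ ∀ x, |g.eval (sfun α b x)| ≤ C := by
  obtain ⟨C, hC⟩ := (isCompact_Icc (a := -√(α ^ 2 + ‖b‖ ^ 2)) (b := √(α ^ 2 + ‖b‖ ^ 2))).exists_bound_of_continuousOn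
    (f := fun t => g.eval t) g.continuous.continuousOn
  have h (x) : |g.eval (sfun α b x)| ≤ C :=
    hC _ (by simpa [Set.mem_Icc] using abs_le.mp (sfun_abs_le α b x))
  exact ⟨C, (abs_nonneg _).trans (h 0), h⟩

lemma one_le_sqrt_qq (x : EuclideanSpace ℝ (Fin d)) : 1 ≤ √(qq x) := by
  rw [Real.one_le_sqrt]; exact one_le_qq x

lemma Xphi_bound (g : Polynomial ℝ) (α : ℝ) (b : EuclideanSpace ℝ (Fin d)) (i : Fin d) :
    ∃ C, 0 ≤ C ∧ ∀ x, |Xphi g α b i x| ≤ C * (vv x * √(qq x)) := by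
  obtain ⟨C0, h0, hC0⟩ := eval_bound g α b
  obtain ⟨C1, h1, hC1⟩ := eval_bound g.derivative α b
  set M := √(α ^ 2 + ‖b‖ ^ 2) with hM
  have M0 : 0 ≤ M := Real.sqrt_nonneg _
  refine ⟨|(d : ℝ) - 2| * C0 + 2 * C1 * M, by positivity, fun x => ?_⟩
  have hx := abs_coord_le x i
  have hm := mm_abs_le α b x i
  have hq := one_le_sqrt_qq x
  have e0 := hC0 x
  have e1 := hC1 x
  unfold Xphi
  rw [abs_mul, abs_of_pos (vv_pos x)]
  have := vv_pos x
  have key : |-((d : ℝ) - 2) * x i * g.eval (sfun α b x)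
    + 2 * g.derivative.eval (sfun α b x) * mm α b i x| ≤ |(d : ℝ) - 2| * √(qq x) * C0 + 2 * C1 * M * √(qq x) := by
    refine (abs_add_le _ _).trans ?_
    rw [abs_mul, abs_mul, abs_mul, abs_mul, abs_neg, abs_two]
    have h2 : 2 * |g.derivative.eval (sfun α b x)| * |mm α b i x| ≤ 2 * C1 * M * 1 := by
      rw [mul_one]; gcongr
    have h3 : 2 * C1 * M * 1 ≤ 2 * C1 * M * √(qq x) := by gcongr
    have h4 : |(d : ℝ) - 2| * |x i| * |g.eval (sfun α b x)| ≤ |(d : ℝ) - 2| * √(qq x) * C0 := by gcongr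
    linarith
  calc _ ≤ vv x * (|(d : ℝ) - 2| * √(qq x) * C0 + 2 * C1 * M * √(qq x)) := by gcongr
    _ = _ := by ring

lemma Yphi_bound (g : Polynomial ℝ) (α : ℝ) (b : EuclideanSpace ℝ (Fin d)) (i : Fin d) :
    ∃ C, 0 ≤ C ∧ ∀ x, |Yphi g α b i x| ≤ C * vv x := by
  obtain ⟨C0, h0, hC0⟩ := eval_bound g α b
  obtain ⟨C1, h1, hC1⟩ := eval_bound g.derivative α b
  obtain ⟨C2, h2, hC2⟩ := eval_bound g.derivative.derivative α b
  set M := √(α ^ 2 + ‖b‖ ^ 2) with hM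
  have M0 : 0 ≤ M := Real.sqrt_nonneg _
  set D : ℝ := |(d : ℝ) - 2|
  refine ⟨(d * D * 1 * C0 + d * 2 * C1 * (1 * M)) + (D * C0 + D * 2 * (C1 * (1 * M)) + 4 * C2 * 1 * (M * M)
    + 2 * C1 * (M + |α|) + 4 * C1 * (1 * M)), by positivity, fun x => ?_⟩
  have hx := abs_coord_le x i
  have hm := mm_abs_le α b x i
  have hs := sfun_abs_le α b x
  have hq := one_le_qq x
  have hq0 := qq_pos x
  have e0 := hC0 x
  have e1 := hC1 x
  have e2 := hC2 x
  have hv := vv_pos x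
  set s := sfun α b x
  set m := mm α b i x
  set G0 := g.eval s
  set G1 := g.derivative.eval s
  set G2 := g.derivative.derivative.eval s
  set w : ℝ := (qq x)⁻¹
  have hw0 : 0 < w := by positivity
  have hw1 : w ≤ 1 := inv_le_one_of_one_le₀ hq
  have hxw : |x i * w| ≤ 1 := by
    rw [abs_mul, abs_of_pos hw0]
    calc |x i| * w ≤ qq x * w := by gcongr; exact hx.trans (sqrt_qq_le x)
      _ = 1 := mul_inv_cancel₀ hq0.ne'
  have hxxw : |x i * x i * w| ≤ 1 := by
    rw [abs_mul, abs_mul, abs_of_pos hw0]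
    calc |x i| * |x i| * w ≤ √(qq x) * √(qq x) * w := by gcongr
      _ = 1 := by rw [Real.mul_self_sqrt hq0.le]; exact mul_inv_cancel₀ hq0.ne'
  have hw : |w| ≤ 1 := by rwa [abs_of_pos hw0]
  have hsa : |s + α| ≤ M + |α| := (abs_add_le _ _).trans (by gcongr)
  have hY : Yphi g α b i x = vv x * ((d * ((d : ℝ) - 2) * (x i * x i * w) * G0 +
      (-(d : ℝ)) * 2 * G1 * ((x i * w) * m)) + (-((d : ℝ) - 2) * G0
      + -((d : ℝ) - 2) * 2 * (G1 * ((x i * w) * m)) + 4 * G2 * w * (m * m)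
      + (-2) * G1 * (s + α) + (-4) * G1 * ((x i * w) * m))) := by
    unfold Yphi
    simp only [w]
    ring
  rw [hY, abs_mul, abs_of_pos hv, mul_comm]
  gcongr
  have a1 : |(d : ℝ) * ((d : ℝ) - 2) * (x i * x i * w) * G0| ≤ d * D * 1 * C0 := by
    rw [abs_mul, abs_mul, abs_mul, Nat.abs_cast]; gcongr
  have a2 : |(-(d : ℝ)) * 2 * G1 * ((x i * w) * m)| ≤ d * 2 * C1 * (1 * M) := by
    rw [abs_mul, abs_mul, abs_mul, abs_mul (x i * w), abs_neg, Nat.abs_cast, abs_two]; gcongr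
  have a3 : |-((d : ℝ) - 2) * G0| ≤ D * C0 := by
    rw [abs_mul, abs_neg]; gcongr
  have a4 : |-((d : ℝ) - 2) * 2 * (G1 * ((x i * w) * m))| ≤ D * 2 * (C1 * (1 * M)) := by
    rw [abs_mul, abs_mul, abs_mul, abs_mul (x i * w), abs_neg, abs_two]; gcongr
  have a5 : |4 * G2 * w * (m * m)| ≤ 4 * C2 * 1 * (M * M) := by
    rw [abs_mul, abs_mul, abs_mul, abs_mul m, abs_of_pos (by norm_num : (0 : ℝ) < 4)]; gcongr
  have a6 : |(-2) * G1 * (s + α)| ≤ 2 * C1 * (M + |α|) := by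
    rw [abs_mul, abs_mul, abs_neg, abs_two]; gcongr
  have a7 : |(-4) * G1 * ((x i * w) * m)| ≤ 4 * C1 * (1 * M) := by
    rw [abs_mul, abs_mul, abs_mul (x i * w), abs_neg, abs_of_pos (by norm_num : (0 : ℝ) < 4)]; gcongr
  refine (abs_add_le _ _).trans (add_le_add ((abs_add_le _ _).trans (add_le_add a1 a2)) ?_)
  refine (abs_add_le _ _).trans (add_le_add ?_ a7)
  refine (abs_add_le _ _).trans (add_le_add ?_ a6)
  refine (abs_add_le _ _).trans (add_le_add ?_ a5)
  exact (abs_add_le _ _).trans (add_le_add a3 a4)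

lemma adm_phi (hd : 3 ≤ d) (g : Polynomial ℝ) (α : ℝ) (b : EuclideanSpace ℝ (Fin d)) :
    Adm (phi g α b) := by
  obtain ⟨C0, h0, hC0⟩ := eval_bound g α b
  refine ⟨diff_phi g α b, fun i => ?_, ?_, ?_⟩
  · simp only [fderiv_phi]
    obtain ⟨C, -, hC⟩ := Xphi_bound g α b i
    exact memLp_of_bound hd (cont_Xphi g α b i).aestronglyMeasurable hC
  · refine memLp_of_bound hd (C := C0) ?_ fun x => ?_
    · exact ((cont_phi g α b).div cont_qq fun x => (qq_pos x).ne').aestronglyMeasurable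
    · have := qq_pos x
      have hv := vv_pos x
      have : phi g α b x / qq x = vv x * g.eval (sfun α b x) := by
        unfold phi; field_simp
      rw [this, abs_mul, abs_of_pos hv]
      have h1 := hC0 x
      have h2 := one_le_sqrt_qq x
      calc _ ≤ vv x * C0 := by gcongr
        _ = C0 * (vv x * 1) := by ring
        _ ≤ _ := by gcongr
  · refine ((integrable_vv_sq_qq hd).const_mul C0).mono'
      ((cont_phi g α b).mul cont_vv).aestronglyMeasurable
      (Filter.Eventually.of_forall fun x => ?_)
    have h1 := hC0 x
    have hv := vv_pos x
    have hq := qq_pos x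
    unfold phi
    rw [Real.norm_eq_abs, abs_mul, abs_mul, abs_mul, abs_of_pos hv, abs_of_pos hq]
    calc _ ≤ qq x * vv x * C0 * vv x := by gcongr
      _ = _ := by ring

lemma adm_add {f g : EuclideanSpace ℝ (Fin d) → ℝ} (hf : Adm f) (hg : Adm g) : Adm (f + g) := by
  refine ⟨hf.diff.add hg.diff, fun i => ?_, ?_, ?_⟩
  · refine ((hf.grad i).add (hg.grad i)).congr_norm ?_ ?_
    · exact (measurable_fderiv_apply_const ℝ _ _).aestronglyMeasurable
    · refine Filter.Eventually.of_forall fun x => ?_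
      rw [fderiv_add (hf.diff x) (hg.diff x)]; rfl
  · convert hf.l2.add hg.l2 using 1
    funext x; simp [add_div]
  · refine (hf.l1.add hg.l1).congr (Filter.Eventually.of_forall fun x => ?_)
    simp [add_mul]

lemma adm_smul {f : EuclideanSpace ℝ (Fin d) → ℝ} (c : ℝ) (hf : Adm f) : Adm (c • f) := by
  refine ⟨hf.diff.const_smul c, fun i => ?_, ?_, ?_⟩
  · refine ((hf.grad i).const_smul c).congr_norm ?_ ?_
    · exact (measurable_fderiv_apply_const ℝ _ _).aestronglyMeasurable
    · refine Filter.Eventually.of_forall fun x => ?_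
      rw [fderiv_const_smul (hf.diff x)]; rfl
  · convert hf.l2.const_smul c using 1
    funext x; simp [mul_div_assoc]
  · refine (hf.l1.smul c).congr (Filter.Eventually.of_forall fun x => ?_)
    simp [mul_assoc]

def adm (d : ℕ) : Submodule ℝ (EuclideanSpace ℝ (Fin d) → ℝ) where
  carrier := {f | Adm f}
  add_mem' := adm_add
  zero_mem' := by
    refine ⟨differentiable_const 0, fun i => ?_, ?_, ?_⟩
    · have : (fun x => fderiv ℝ (0 : EuclideanSpace ℝ (Fin d) → ℝ) x (ei i)) = fun _ => 0 := by
        funext x; simp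
      rw [this]; exact MemLp.zero'
    · simp
    · simp
  smul_mem' := fun c _ h => adm_smul c h

lemma integrable_Q {f g : EuclideanSpace ℝ (Fin d) → ℝ} (hf : Adm f) (hg : Adm g) (i : Fin d) :
    Integrable (fun x => fderiv ℝ f x (ei i) * fderiv ℝ g x (ei i)) :=
  (hf.grad i).integrable_mul (hg.grad i)

lemma integrable_B {f g : EuclideanSpace ℝ (Fin d) → ℝ} (hf : Adm f) (hg : Adm g) :
    Integrable (fun x => (f x / qq x) * (g x / qq x)) :=
  hf.l2.integrable_mul hg.l2

def QQ (d : ℕ) : adm d →ₗ[ℝ] adm d →ₗ[ℝ] ℝ :=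
  LinearMap.mk₂ ℝ (fun f g => ∑ i, ∫ x, fderiv ℝ f.1 x (ei i) * fderiv ℝ g.1 x (ei i))
    (by
      intro f f' g
      rw [← Finset.sum_add_distrib]
      refine Finset.sum_congr rfl fun i _ => ?_
      rw [← integral_add (integrable_Q f.2 g.2 i) (integrable_Q f'.2 g.2 i)]
      congr 1; funext x
      rw [Submodule.coe_add, fderiv_add (f.2.diff x) (f'.2.diff x)]
      simp [add_mul])
    (by
      intro c f g
      rw [Finset.smul_sum]
      refine Finset.sum_congr rfl fun i _ => ?_
      rw [← integral_smul]
      congr 1; funext x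
      rw [Submodule.coe_smul, fderiv_const_smul (f.2.diff x)]
      simp [mul_assoc])
    (by
      intro g f f'
      rw [← Finset.sum_add_distrib]
      refine Finset.sum_congr rfl fun i _ => ?_
      rw [← integral_add (integrable_Q g.2 f.2 i) (integrable_Q g.2 f'.2 i)]
      congr 1; funext x
      rw [Submodule.coe_add, fderiv_add (f.2.diff x) (f'.2.diff x)]
      simp [mul_add])
    (by
      intro c g f
      rw [Finset.smul_sum]
      refine Finset.sum_congr rfl fun i _ => ?_
      rw [← integral_smul]
      congr 1; funext x
      rw [Submodule.coe_smul, fderiv_const_smul (f.2.diff x)]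
      simp; ring)

def BB (d : ℕ) : adm d →ₗ[ℝ] adm d →ₗ[ℝ] ℝ :=
  LinearMap.mk₂ ℝ (fun f g => ∫ x, (f.1 x / qq x) * (g.1 x / qq x))
    (by
      intro f f' g
      rw [← integral_add (integrable_B f.2 g.2) (integrable_B f'.2 g.2)]
      congr 1; funext x
      simp; ring)
    (by
      intro c f g
      rw [← integral_smul]
      congr 1; funext x
      simp; ring)
    (by
      intro g f f'
      rw [← integral_add (integrable_B g.2 f.2) (integrable_B g.2 f'.2)]
      congr 1; funext x
      simp; ring)
    (by
      intro c g f
      rw [← integral_smul]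
      congr 1; funext x
      simp; ring)

def phiA (hd : 3 ≤ d) (g : Polynomial ℝ) (α : ℝ) (b : EuclideanSpace ℝ (Fin d)) : adm d :=
  ⟨phi g α b, adm_phi hd g α b⟩

lemma weak_phi (hd : 3 ≤ d) (g : Polynomial ℝ) (α : ℝ) (b : EuclideanSpace ℝ (Fin d)) (k : ℕ)
    (hg : TT d (α ^ 2 + ‖b‖ ^ 2) g = Polynomial.C (mu d k) * g) (f : adm d) :
    QQ d f (phiA hd g α b) = lam d k * BB d f (phiA hd g α b) := by
  change (∑ i, ∫ x, fderiv ℝ f.1 x (ei i) * fderiv ℝ (phi g α b) x (ei i)) =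
    lam d k * ∫ x, (f.1 x / qq x) * (phi g α b x / qq x)
  simp only [fderiv_phi]
  have hY (i : Fin d) : Integrable (fun x => f.1 x * Yphi g α b i x) := by
    obtain ⟨C, C0, hC⟩ := Yphi_bound g α b i
    refine (f.2.l1.norm.const_mul C).mono'
      (f.2.diff.continuous.mul (cont_Yphi g α b i)).aestronglyMeasurable
      (Filter.Eventually.of_forall fun x => ?_)
    rw [norm_mul, norm_mul, Real.norm_eq_abs (Yphi _ _ _ _ _), Real.norm_of_nonneg (vv_pos x).le]
    calc _ ≤ ‖f.1 x‖ * (C * vv x) := by gcongr; exact hC x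
      _ = _ := by ring
  have hi (i : Fin d) : (∫ x, fderiv ℝ f.1 x (ei i) * Xphi g α b i x) =
      - ∫ x, f.1 x * Yphi g α b i x := by
    obtain ⟨C, C0, hC⟩ := Yphi_bound g α b i
    obtain ⟨C', C0', hC'⟩ := Xphi_bound g α b i
    refine ibp hd f.2 i (cont_Xphi g α b i) (cont_Yphi g α b i) (line_Xphi g α b · i)
      (C := max C C') (fun x => (hC' x).trans ?_) (fun x => (hC x).trans ?_)
    · have := vv_pos x
      gcongr; exact le_max_right _ _
    · have := vv_pos x
      gcongr; exact le_max_left _ _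
  simp only [hi]
  rw [Finset.sum_neg_distrib, ← integral_finsetSum _ (fun i _ => hY i), ← integral_neg,
    ← integral_const_mul]
  congr 1; funext x
  rw [← Finset.mul_sum, sum_Yphi g α b x k hg]
  have := (qq_pos x).ne'
  field_simp

end eigen

section polys
variable {d : ℕ}
open Polynomial

lemma TT_sub (N : ℝ) (g h : ℝ[X]) : TT d N (g - h) = TT d N g - TT d N h := by
  simp only [TT, derivative_sub]; ring

lemma TT_add (N : ℝ) (g h : ℝ[X]) : TT d N (g + h) = TT d N g + TT d N h := by
  simp only [TT, derivative_add]; ring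

lemma TT_C_mul (N c : ℝ) (g : ℝ[X]) : TT d N (C c * g) = C c * TT d N g := by
  simp only [TT, derivative_C_mul]; ring

lemma TT_zero (N : ℝ) : TT d N 0 = 0 := by simp [TT]

lemma TT_sum (N : ℝ) (s : Finset ℕ) (g : ℕ → ℝ[X]) :
    TT d N (∑ k ∈ s, g k) = ∑ k ∈ s, TT d N (g k) := by
  induction s using Finset.induction_on with
  | empty => simp [TT_zero]
  | insert a s ha ih => rw [Finset.sum_insert ha, Finset.sum_insert ha, TT_add, ih]

lemma TT_X_pow (N : ℝ) (n : ℕ) : TT d N (X ^ (n + 2)) =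
    C (mu d (n + 2)) * X ^ (n + 2) - C (N * ((n : ℝ) + 2) * ((n : ℝ) + 1)) * X ^ n := by
  have h : mu d (n + 2) = ((n : ℝ) + 2) * (n + 1) + d * ((n : ℝ) + 2) := by
    unfold mu; push_cast; ring
  rw [h]
  simp only [TT, derivative_X_pow, derivative_C_mul, Nat.add_sub_cancel, derivative_mul,
    derivative_natCast, zero_mul, zero_add]
  rw [show n + 2 - 1 = n + 1 from rfl, show n + 1 - 1 = n from rfl]
  simp only [C_add, C_mul, map_ofNat, map_natCast, map_one, derivative_natCast, zero_mul, zero_add,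
    derivative_C]
  push_cast
  ring

lemma mu_lt (hd : 1 ≤ d) {j k : ℕ} (h : j < k) : mu d j < mu d k := by
  unfold mu
  have h1 : (1 : ℝ) ≤ d := by exact_mod_cast hd
  have h2 : (j : ℝ) < k := by exact_mod_cast h
  have h3 : (0 : ℝ) ≤ j := Nat.cast_nonneg j
  nlinarith

lemma poly_decomp (hd : 1 ≤ d) (N : ℝ) (n : ℕ) : ∃ G : ℕ → ℝ[X],
    (∀ k, TT d N (G k) = C (mu d k) * G k ∧ (G k).natDegree ≤ k) ∧
    X ^ n = ∑ k ∈ Finset.range (n + 1), G k := by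
  induction n using Nat.twoStepInduction with
  | zero =>
    refine ⟨fun k => if k = 0 then 1 else 0, fun k => ?_, by simp⟩
    by_cases hk : k = 0
    · subst hk; simp [TT, mu]
    · simp [hk, TT_zero]
  | one =>
    refine ⟨fun k => if k = 1 then X else 0, fun k => ?_, by simp [Finset.sum_range_succ]⟩
    by_cases hk : k = 1
    · subst hk; simp [TT, mu]
    · simp [hk, TT_zero]
  | more n ih _ =>
    obtain ⟨G, hG, hs⟩ := ih
    let c : ℕ → ℝ := fun k => -(N * ((n : ℝ) + 2) * ((n : ℝ) + 1)) / (mu d k - mu d (n + 2))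
    let h : ℝ[X] := ∑ k ∈ Finset.range (n + 1), C (c k) * G k
    have hh : TT d N h - C (mu d (n + 2)) * h = - (C (N * ((n : ℝ) + 2) * ((n : ℝ) + 1)) * X ^ n) := by
      simp only [h]
      rw [TT_sum, hs, Finset.mul_sum, Finset.mul_sum, ← Finset.sum_sub_distrib,
        ← Finset.sum_neg_distrib]
      refine Finset.sum_congr rfl fun k hk => ?_
      rw [TT_C_mul, (hG k).1]
      have hne : mu d k - mu d (n + 2) ≠ 0 := by
        have := mu_lt hd (show k < n + 2 by have := Finset.mem_range.mp hk; omega)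
        linarith
      have hc : c k * (mu d k - mu d (n + 2)) = -(N * ((n : ℝ) + 2) * ((n : ℝ) + 1)) := by
        simp only [c]; field_simp
      have hc' := congrArg (C : ℝ → ℝ[X]) hc
      rw [C_mul, C_sub, C_neg] at hc'
      linear_combination (G k) * hc'
    refine ⟨fun k => if k < n + 1 then C (c k) * G k else if k = n + 2 then X ^ (n + 2) - h else 0,
      fun k => ?_, ?_⟩
    · by_cases h1 : k < n + 1
      · simp only [h1, if_true]
        refine ⟨by rw [TT_C_mul, (hG k).1]; ring, (natDegree_C_mul_le _ _).trans (hG k).2⟩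
      · by_cases h2 : k = n + 2
        · subst h2
          simp only [h1, if_false, if_true]
          refine ⟨?_, ?_⟩
          · rw [TT_sub, TT_X_pow]
            linear_combination -hh
          · refine (natDegree_sub_le _ _).trans (max_le (by simp) ?_)
            refine natDegree_sum_le_of_forall_le _ _ fun k hk => ?_
            refine (natDegree_C_mul_le _ _).trans ((hG k).2.trans ?_)
            have := Finset.mem_range.mp hk; omega
        · simp [h1, h2, TT_zero]
    · rw [Finset.sum_range_succ, Finset.sum_range_succ]
      have : ∑ k ∈ Finset.range (n + 1), (if k < n + 1 then C (c k) * G k else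
          if k = n + 2 then X ^ (n + 2) - h else 0) = h := by
        refine Finset.sum_congr rfl fun k hk => ?_
        rw [if_pos (Finset.mem_range.mp hk)]
      rw [this]
      simp

end polys

lemma abstract_gap {V : Type*} [AddCommGroup V] [Module ℝ V] (Q B : V →ₗ[ℝ] V →ₗ[ℝ] ℝ)
    (Qs : ∀ f g, Q f g = Q g f) (Bs : ∀ f g, B f g = B g f)
    (Q0 : ∀ f, 0 ≤ Q f f) (B0 : ∀ f, 0 ≤ B f f) (l : ℕ → ℝ) (hl : StrictMono l) (l2 : 0 ≤ l 2)
    (f : V) (s : Finset ℕ) (ψ : ℕ → V) (hw : ∀ k, ∀ g, Q g (ψ k) = l k * B g (ψ k))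
    (h01 : ∀ k < 2, B f (ψ k) = 0) :
    l 2 * (B f f - B (f - ∑ k ∈ s, ψ k) (f - ∑ k ∈ s, ψ k)) ≤ Q f f := by
  have horth (j k : ℕ) (h : j ≠ k) : B (ψ j) (ψ k) = 0 := by
    have h1 := hw k (ψ j)
    have h2 := hw j (ψ k)
    rw [Qs, h2, Bs] at h1
    have h3 : (l j - l k) * B (ψ j) (ψ k) = 0 := by linarith
    rcases mul_eq_zero.mp h3 with h4 | h4
    · exact absurd (hl.injective (sub_eq_zero.mp h4)) h
    · exact h4
  have hself (t : Finset ℕ) (k : ℕ) (hk : k ∈ t) :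
      B (∑ j ∈ t, ψ j) (ψ k) = B (ψ k) (ψ k) := by
    rw [map_sum, LinearMap.sum_apply]
    exact Finset.sum_eq_single_of_mem k hk fun j _ hj => horth j k hj
  have hB : B (f - ∑ k ∈ s, ψ k) (f - ∑ k ∈ s, ψ k) =
      B f f - ∑ k ∈ s, (2 * B f (ψ k) - B (ψ k) (ψ k)) := by
    have e1 : B f (∑ k ∈ s, ψ k) = ∑ k ∈ s, B f (ψ k) := map_sum _ _ _
    have e2 : B (∑ k ∈ s, ψ k) (∑ k ∈ s, ψ k) = ∑ k ∈ s, B (ψ k) (ψ k) := by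
      conv_lhs => rw [map_sum (B (∑ k ∈ s, ψ k))]
      exact Finset.sum_congr rfl fun k hk => hself s k hk
    rw [map_sub, map_sub, LinearMap.sub_apply, LinearMap.sub_apply, Bs (∑ k ∈ s, ψ k) f, e1, e2,
      Finset.sum_sub_distrib, ← Finset.mul_sum]
    ring
  set x : ℕ → ℝ := fun k => 2 * B f (ψ k) - B (ψ k) (ψ k) with hx
  set K := s.filter (fun k => 0 < x k) with hK
  have hQ : Q (f - ∑ k ∈ K, ψ k) (f - ∑ k ∈ K, ψ k) = Q f f - ∑ k ∈ K, l k * x k := by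
    have e1 (g : V) : Q g (∑ k ∈ K, ψ k) = ∑ k ∈ K, l k * B g (ψ k) := by
      rw [map_sum]; exact Finset.sum_congr rfl fun k _ => hw k g
    have e2 : Q (∑ k ∈ K, ψ k) (∑ k ∈ K, ψ k) = ∑ k ∈ K, l k * B (ψ k) (ψ k) := by
      rw [e1]
      exact Finset.sum_congr rfl fun k hk => by rw [hself K k hk]
    have e3 : ∑ k ∈ K, l k * x k = 2 * ∑ k ∈ K, l k * B f (ψ k) - ∑ k ∈ K, l k * B (ψ k) (ψ k) := by
      rw [Finset.mul_sum, ← Finset.sum_sub_distrib]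
      exact Finset.sum_congr rfl fun k _ => by simp only [hx]; ring
    rw [map_sub, map_sub, LinearMap.sub_apply, LinearMap.sub_apply, Qs (∑ k ∈ K, ψ k) f, e2, e1, e3]
    ring
  have h0 := Q0 (f - ∑ k ∈ K, ψ k)
  rw [hQ] at h0
  rw [hB]
  have h1 : l 2 * ∑ k ∈ s, x k ≤ ∑ k ∈ K, l k * x k := by
    rw [hK, Finset.sum_filter, Finset.mul_sum]
    refine Finset.sum_le_sum fun k _ => ?_
    split_ifs with hp
    · have hk : 2 ≤ k := by
        by_contra hk
        have := h01 k (by omega)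
        have := B0 (ψ k)
        simp only [hx] at hp
        linarith
      have := hl.monotone hk
      gcongr
    · exact mul_nonpos_of_nonneg_of_nonpos l2 (not_lt.mp hp)
  linarith

section density
variable {d : ℕ}

lemma fourier_vanish {k s : EuclideanSpace ℝ (Fin d) → ℝ} (hk : Integrable k)
    (cs : Continuous s) {M : ℝ} (hM : ∀ x, |s x| ≤ M) (h : ∀ n : ℕ, ∫ x, k x * s x ^ n = 0) :
    ∫ x, (k x : ℂ) * Complex.exp (s x * Complex.I) = 0 := by
  let F : ℕ → EuclideanSpace ℝ (Fin d) → ℂ := fun n x =>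
    (Complex.I ^ n / (n.factorial : ℂ)) * ((k x * s x ^ n : ℝ) : ℂ)
  have M0 : 0 ≤ M := (abs_nonneg _).trans (hM 0)
  have hbd (n : ℕ) : Integrable (fun x => k x * s x ^ n) := by
    refine (hk.norm.mul_const (M ^ n)).mono' (hk.aestronglyMeasurable.mul (cs.pow n).aestronglyMeasurable)
      (Filter.Eventually.of_forall fun x => ?_)
    rw [norm_mul, norm_pow]
    have := hM x
    rw [Real.norm_eq_abs (s x)]
    gcongr
  have hi (n : ℕ) : Integrable (F n) := (hbd n).ofReal.const_mul _
  have hnorm (n : ℕ) : ∫ x, ‖F n x‖ ≤ (M ^ n / (n.factorial : ℝ)) * ∫ x, ‖k x‖ := by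
    rw [← integral_const_mul]
    refine integral_mono (hi n).norm (hk.norm.const_mul _) fun x => ?_
    simp only [F]
    rw [norm_mul, norm_div, norm_pow, Complex.norm_I, one_pow, Complex.norm_real, norm_mul, norm_pow,
      Complex.norm_natCast, Real.norm_eq_abs (s x)]
    have := hM x
    calc _ ≤ 1 / (n.factorial : ℝ) * (‖k x‖ * M ^ n) := by gcongr
      _ = _ := by ring
  have hsum : Summable fun n => ∫ x, ‖F n x‖ := by
    refine Summable.of_nonneg_of_le (fun n => integral_nonneg fun x => norm_nonneg _) hnorm ?_
    exact (Real.summable_pow_div_factorial M).mul_right _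
  have := hasSum_integral_of_summable_integral_norm hi hsum
  have h0 (n : ℕ) : ∫ x, F n x = 0 := by
    simp only [F]
    rw [integral_const_mul, integral_complex_ofReal, h n]; simp
  simp only [h0] at this
  have h2 := this.unique hasSum_zero
  rw [← h2]
  congr 1; funext x
  have h3 := (NormedSpace.expSeries_div_hasSum_exp ((s x : ℂ) * Complex.I)).mul_left (k x : ℂ)
  rw [← Complex.exp_eq_exp_ℂ] at h3
  rw [← h3.tsum_eq]
  congr 1; funext n
  simp only [F]
  push_cast
  ring

def omg (x : EuclideanSpace ℝ (Fin d)) : ℝ × EuclideanSpace ℝ (Fin d) :=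
  ((2 - qq x) / qq x, (2 / qq x) • x)

lemma cont_omg : Continuous (omg (d := d)) := by
  have h (x : EuclideanSpace ℝ (Fin d)) : qq x ≠ 0 := (qq_pos x).ne'
  have := cont_qq (d := d)
  unfold omg
  fun_prop (disch := exact h _)

lemma omg_inv (x : EuclideanSpace ℝ (Fin d)) : (1 + (omg x).1)⁻¹ • (omg x).2 = x := by
  have h := (qq_pos x).ne'
  simp only [omg, smul_smul]
  have : (1 + (2 - qq x) / qq x)⁻¹ * (2 / qq x) = 1 := by
    have : 1 + (2 - qq x) / qq x = 2 / qq x := by field_simp; ring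
    rw [this]
    field_simp
  rw [this, one_smul]

lemma dual_omg (L : StrongDual ℝ (ℝ × EuclideanSpace ℝ (Fin d))) :
    ∃ α b, ∀ x, L (omg x) = sfun α b x := by
  let L2 : StrongDual ℝ (EuclideanSpace ℝ (Fin d)) := L.comp (ContinuousLinearMap.inr ℝ ℝ _)
  refine ⟨L (1, 0), (InnerProductSpace.toDual ℝ _).symm L2, fun x => ?_⟩
  have h := (qq_pos x).ne'
  unfold sfun
  rw [InnerProductSpace.toDual_symm_apply]
  have h1 : omg x = ((2 - qq x) / qq x) • ((1 : ℝ), (0 : EuclideanSpace ℝ (Fin d))) +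
      (2 / qq x) • ((0 : ℝ), x) := by simp [omg]
  have h2 : L2 x = L (0, x) := by simp [L2]
  rw [h1, map_add, map_smul, map_smul, h2]
  simp only [smul_eq_mul]
  field_simp
  ring

lemma total {k : EuclideanSpace ℝ (Fin d) → ℝ} (hk : Integrable k) (mk : Measurable k)
    (h : ∀ (α : ℝ) (b : EuclideanSpace ℝ (Fin d)) (n : ℕ), ∫ x, k x * sfun α b x ^ n = 0) :
    k =ᵐ[volume] 0 := by
  let μ1 : Measure (EuclideanSpace ℝ (Fin d)) := volume.withDensity fun x => ENNReal.ofReal (k x)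
  let μ2 : Measure (EuclideanSpace ℝ (Fin d)) := volume.withDensity fun x => ENNReal.ofReal (-k x)
  have : IsFiniteMeasure μ1 := isFiniteMeasure_withDensity_ofReal hk.2
  have : IsFiniteMeasure μ2 := isFiniteMeasure_withDensity_ofReal hk.neg.2
  have mk2 : Measurable fun x => ENNReal.ofReal (-k x) := mk.neg.ennreal_ofReal
  have key : μ1.map omg = μ2.map omg := by
    apply Measure.ext_of_charFunDual
    funext L
    obtain ⟨α, b, hab⟩ := dual_omg L
    rw [charFunDual_apply, charFunDual_apply]
    have cL : Continuous fun v : ℝ × EuclideanSpace ℝ (Fin d) => Complex.exp (L v * Complex.I) := by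
      fun_prop
    rw [integral_map cont_omg.measurable.aemeasurable cL.aestronglyMeasurable,
      integral_map cont_omg.measurable.aemeasurable cL.aestronglyMeasurable]
    simp only [hab, μ1, μ2]
    rw [integral_withDensity_eq_integral_toReal_smul mk.ennreal_ofReal (by simp),
      integral_withDensity_eq_integral_toReal_smul mk2 (by simp)]
    have hF := fourier_vanish hk (cont_sfun α b) (sfun_abs_le α b) (h α b)
    have cs := cont_sfun α b
    have cE : Continuous fun x => Complex.exp (sfun α b x * Complex.I) := by fun_prop
    have aux (r : EuclideanSpace ℝ (Fin d) → ℝ) (hr : Integrable r) :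
        Integrable fun x => (ENNReal.ofReal (r x)).toReal • Complex.exp (sfun α b x * Complex.I) := by
      refine hr.norm.mono' ?_ (Filter.Eventually.of_forall fun x => ?_)
      · exact (hr.aestronglyMeasurable.aemeasurable.ennreal_ofReal.ennreal_toReal.aestronglyMeasurable).smul
          cE.aestronglyMeasurable
      · rw [norm_smul, Complex.norm_exp_ofReal_mul_I, mul_one]
        rw [ENNReal.toReal_ofReal']
        rw [Real.norm_of_nonneg (le_max_right _ _)]
        exact max_le (le_abs_self _) (abs_nonneg _)
    have i1 := aux k hk
    have i2 := aux (fun x => -k x) hk.neg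
    rw [← sub_eq_zero, ← integral_sub i1 i2, ← hF]
    congr 1; funext x
    rw [ENNReal.toReal_ofReal', ENNReal.toReal_ofReal', ← sub_smul]
    rw [max_zero_sub_eq_self, Complex.real_smul]
  have hinv (μ : Measure (EuclideanSpace ℝ (Fin d))) :
      (μ.map omg).map (fun p : ℝ × EuclideanSpace ℝ (Fin d) => (1 + p.1)⁻¹ • p.2) = μ := by
    rw [Measure.map_map (by fun_prop) cont_omg.measurable]
    have : (fun p : ℝ × EuclideanSpace ℝ (Fin d) => (1 + p.1)⁻¹ • p.2) ∘ omg = id := by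
      funext x; exact omg_inv x
    rw [this, Measure.map_id]
  have h12 : μ1 = μ2 := by rw [← hinv μ1, ← hinv μ2, key]
  have := (withDensity_eq_iff_of_sigmaFinite mk.ennreal_ofReal.aemeasurable
    mk2.aemeasurable).mp h12
  filter_upwards [this] with x hx
  have h3 := congrArg ENNReal.toReal hx
  simp only [ENNReal.toReal_ofReal', Pi.neg_apply] at h3
  have := max_zero_sub_eq_self (k x)
  simp only [Pi.zero_apply]
  linarith

end density

section final
variable {d : ℕ}

def VV (hd : 3 ≤ d) (k : ℕ) : Submodule ℝ (adm d) :=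
  Submodule.span ℝ {φ | ∃ (g : Polynomial ℝ) (α : ℝ) (b : EuclideanSpace ℝ (Fin d)),
    TT d (α ^ 2 + ‖b‖ ^ 2) g = Polynomial.C (mu d k) * g ∧ g.natDegree ≤ k ∧ φ = phiA hd g α b}

lemma weak_VV (hd : 3 ≤ d) (k : ℕ) {ψ : adm d} (hψ : ψ ∈ VV hd k) (f : adm d) :
    QQ d f ψ = lam d k * BB d f ψ := by
  induction hψ using Submodule.span_induction with
  | mem x h =>
    obtain ⟨g, α, b, h1, -, rfl⟩ := h
    exact weak_phi hd g α b k h1 f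
  | zero => simp
  | add x y _ _ hx hy => rw [map_add, map_add, hx, hy]; ring
  | smul a x _ hx => rw [map_smul, map_smul, hx]; simp only [smul_eq_mul]; ring

lemma phiA_sum (hd : 3 ≤ d) (s : Finset ℕ) (G : ℕ → Polynomial ℝ) (α : ℝ)
    (b : EuclideanSpace ℝ (Fin d)) :
    phiA hd (∑ k ∈ s, G k) α b = ∑ k ∈ s, phiA hd (G k) α b := by
  apply Subtype.ext
  rw [Submodule.coe_sum]
  funext x
  rw [Finset.sum_apply]
  simp only [phiA, phi]
  rw [Polynomial.eval_finsetSum, Finset.mul_sum]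

lemma phiA_X_pow_mem (hd : 3 ≤ d) (n : ℕ) (α : ℝ) (b : EuclideanSpace ℝ (Fin d)) :
    phiA hd (Polynomial.X ^ n) α b ∈ ⨆ k, VV hd k := by
  obtain ⟨G, hG, hs⟩ := poly_decomp (d := d) (by omega) (α ^ 2 + ‖b‖ ^ 2) n
  rw [hs, phiA_sum]
  refine Submodule.sum_mem _ fun k _ => ?_
  refine Submodule.mem_iSup_of_mem k (Submodule.subset_span ?_)
  exact ⟨G k, α, b, (hG k).1, (hG k).2, rfl⟩

def JJ (d : ℕ) : adm d →ₗ[ℝ] Lp ℝ 2 (volume : Measure (EuclideanSpace ℝ (Fin d))) where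
  toFun f := f.2.l2.toLp
  map_add' f g := by
    rw [← MemLp.toLp_add]
    apply MemLp.toLp_congr
    refine Filter.Eventually.of_forall fun x => ?_
    simp [add_div]
  map_smul' c f := by
    rw [RingHom.id_apply, ← MemLp.toLp_const_smul]
    apply MemLp.toLp_congr
    refine Filter.Eventually.of_forall fun x => ?_
    simp [mul_div_assoc]

lemma JJ_coe (f : adm d) : (JJ d f : EuclideanSpace ℝ (Fin d) → ℝ) =ᵐ[volume]
    fun x => f.1 x / qq x := f.2.l2.coeFn_toLp

lemma JJ_inner (f g : adm d) : inner ℝ (JJ d f) (JJ d g) = BB d f g := by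
  rw [L2.inner_def]
  change _ = ∫ x, (f.1 x / qq x) * (g.1 x / qq x)
  apply integral_congr_ae
  filter_upwards [JJ_coe f, JJ_coe g] with x h1 h2
  rw [h1, h2]
  simp [mul_comm]

lemma dense_VV (hd : 3 ≤ d) : ((⨆ k, VV hd k).map (JJ d)).topologicalClosure = ⊤ := by
  rw [Submodule.topologicalClosure_eq_top_iff, Submodule.eq_bot_iff]
  intro h hh
  have mh : StronglyMeasurable h := Lp.stronglyMeasurable h
  have hi : Integrable (fun x => h x * vv x) := (Lp.memLp h).integrable_mul (memLp_vv hd)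
  have key := total hi (mh.measurable.mul cont_vv.measurable) ?_
  · apply Lp.ext
    refine Filter.EventuallyEq.trans ?_ (Lp.coeFn_zero ℝ 2 _).symm
    filter_upwards [key] with x hx
    simpa [(vv_pos x).ne'] using hx
  · intro α b n
    have h1 := (Submodule.mem_orthogonal _ _).mp hh (JJ d (phiA hd (Polynomial.X ^ n) α b))
      (Submodule.mem_map_of_mem (phiA_X_pow_mem hd n α b))
    rw [← h1, L2.inner_def]
    apply integral_congr_ae
    filter_upwards [JJ_coe (phiA hd (Polynomial.X ^ n) α b)] with x h2
    rw [h2]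
    have := (qq_pos x).ne'
    simp [phiA, phi]
    field_simp

lemma approx_VV (hd : 3 ≤ d) (f : adm d) {ε : ℝ} (hε : 0 < ε) :
    ∃ (s : Finset ℕ) (ψ : ℕ → adm d), (∀ k, ψ k ∈ VV hd k) ∧
      BB d (f - ∑ k ∈ s, ψ k) (f - ∑ k ∈ s, ψ k) < ε := by
  have h1 : JJ d f ∈ closure (((⨆ k, VV hd k).map (JJ d) : Submodule ℝ _) : Set (Lp ℝ 2 _)) := by
    have : JJ d f ∈ ((⨆ k, VV hd k).map (JJ d)).topologicalClosure := by
      rw [dense_VV hd]; trivial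
    exact this
  obtain ⟨y, hy, hlt⟩ := Metric.mem_closure_iff.mp h1 (√ε) (Real.sqrt_pos.mpr hε)
  obtain ⟨ψ, hψ, rfl⟩ := hy
  obtain ⟨F, hF, hs⟩ := (Submodule.mem_iSup_iff_exists_finsupp _ _).mp hψ
  refine ⟨F.support, F, hF, ?_⟩
  have hs' : ∑ k ∈ F.support, F k = ψ := hs
  rw [hs', ← JJ_inner, real_inner_self_eq_norm_sq, map_sub, ← dist_eq_norm]
  calc _ < √ε ^ 2 := by gcongr
    _ = ε := Real.sq_sqrt hε.le

lemma phiA_linear (hd : 3 ≤ d) (g : Polynomial ℝ) (hg : g.natDegree ≤ 1) (α : ℝ)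
    (b : EuclideanSpace ℝ (Fin d)) :
    phiA hd g α b = g.coeff 0 • phiA hd 1 0 0 + (g.coeff 1 * α) • phiA hd Polynomial.X 1 0 +
      ∑ i, (g.coeff 1 * b i) • phiA hd Polynomial.X 0 (ei i) := by
  apply Subtype.ext
  rw [Submodule.coe_add, Submodule.coe_add, Submodule.coe_sum]
  funext x
  rw [Pi.add_apply, Pi.add_apply, Finset.sum_apply]
  simp only [phiA, phi, Submodule.coe_smul, Pi.smul_apply, smul_eq_mul]
  rw [Polynomial.eq_X_add_C_of_natDegree_le_one hg]
  have hb : inner ℝ b x = ∑ i, b i * x i := by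
    rw [PiLp.inner_apply]; simp [mul_comm]
  have he (i : Fin d) : inner ℝ (ei i) x = x i := by
    simp [ei, EuclideanSpace.inner_single_left]
  have h := (qq_pos x).ne'
  simp only [Polynomial.eval_add, Polynomial.eval_mul, Polynomial.eval_C, Polynomial.eval_X,
    Polynomial.eval_one, sfun, hb, he, inner_zero_left]
  have : ∑ i, g.coeff 1 * b i * (qq x * vv x * (-0 + 2 * (0 + x i) / qq x)) =
      g.coeff 1 * (2 * vv x) * ∑ i, b i * x i := by
    rw [Finset.mul_sum]
    refine Finset.sum_congr rfl fun i _ => ?_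
    field_simp; ring
  simp
  simp at this
  rw [this]
  field_simp
  ring

lemma orth_VV (hd : 3 ≤ d) (f : adm d)
    (o1 : (∫ x, f.1 x * uAT d x / (1 + ‖x‖ ^ 2) ^ 2) = 0)
    (o2 : (∫ x, f.1 x * (1 - ‖x‖ ^ 2) * uAT d x / (1 + ‖x‖ ^ 2) ^ 3) = 0)
    (o3 : ∀ i : Fin d, (∫ x, f.1 x * x i * uAT d x / (1 + ‖x‖ ^ 2) ^ 3) = 0)
    (k : ℕ) (hk : k < 2) {ψ : adm d} (hψ : ψ ∈ VV hd k) : BB d f ψ = 0 := by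
  have b1 : BB d f (phiA hd 1 0 0) = 0 := by
    refine Eq.trans ?_ o1
    change (∫ x, (f.1 x / qq x) * (phi 1 0 0 x / qq x)) = _
    congr 1; funext x
    rw [uAT_eq]
    simp only [phi, Polynomial.eval_one, ← show qq x = 1 + ‖x‖ ^ 2 from rfl]
    have h := (qq_pos x).ne'
    field_simp
  have b2 : BB d f (phiA hd Polynomial.X 1 0) = 0 := by
    refine Eq.trans ?_ o2
    change (∫ x, (f.1 x / qq x) * (phi Polynomial.X 1 0 x / qq x)) = _
    congr 1; funext x
    rw [uAT_eq, show 1 - ‖x‖ ^ 2 = 2 - qq x by unfold qq; ring]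
    simp only [phi, Polynomial.eval_X, sfun, inner_zero_left, ← show qq x = 1 + ‖x‖ ^ 2 from rfl]
    have h := (qq_pos x).ne'
    field_simp
    ring
  have b3 (i : Fin d) : BB d f (phiA hd Polynomial.X 0 (ei i)) = 0 := by
    have : BB d f (phiA hd Polynomial.X 0 (ei i)) =
        2 * ∫ x, f.1 x * x i * uAT d x / (1 + ‖x‖ ^ 2) ^ 3 := by
      rw [← integral_const_mul]
      change (∫ x, (f.1 x / qq x) * (phi Polynomial.X 0 (ei i) x / qq x)) = _
      congr 1; funext x
      rw [uAT_eq]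
      have he : inner ℝ (ei i) x = x i := by
        simp [ei, EuclideanSpace.inner_single_left]
      simp only [phi, Polynomial.eval_X, sfun, he, ← show qq x = 1 + ‖x‖ ^ 2 from rfl]
      have h := (qq_pos x).ne'
      field_simp
      ring
    rw [this, o3 i, mul_zero]
  induction hψ using Submodule.span_induction with
  | mem x h =>
    obtain ⟨g, α, b, -, h2, rfl⟩ := h
    rw [phiA_linear hd g (by omega) α b]
    simp [map_add, map_sum, map_smul, b1, b2, b3]
  | zero => simp
  | add x y _ _ hx hy => rw [map_add, hx, hy, add_zero]
  | smul a x _ hx => rw [map_smul, hx, smul_zero]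

lemma fderiv_ei {f : EuclideanSpace ℝ (Fin d) → ℝ} (x : EuclideanSpace ℝ (Fin d)) (i : Fin d) :
    fderiv ℝ f x (ei i) = gradient f x i := by
  have : fderiv ℝ f x (ei i) = inner ℝ (gradient f x) (ei i) := by
    simp [gradient]
  rw [this, ei, EuclideanSpace.inner_single_right]
  simp

lemma sum_grad {f : EuclideanSpace ℝ (Fin d) → ℝ} (x : EuclideanSpace ℝ (Fin d)) :
    ∑ i, fderiv ℝ f x (ei i) * fderiv ℝ f x (ei i) = ‖gradient f x‖ ^ 2 := by
  rw [EuclideanSpace.norm_sq_eq]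
  refine Finset.sum_congr rfl fun i _ => ?_
  rw [fderiv_ei, Real.norm_eq_abs, sq_abs, sq]

lemma adm_of_D12 (hd : 3 ≤ d) {f : EuclideanSpace ℝ (Fin d) → ℝ} (hf : MemD12 d f)
    (hL2 : Integrable (fun x => f x ^ 2 / (1 + ‖x‖ ^ 2) ^ 2)) : Adm f := by
  obtain ⟨h1, h2, h3⟩ := hf
  have hd3 : (3 : ℝ) ≤ d := by exact_mod_cast hd
  refine ⟨h1, fun i => ?_, ?_, ?_⟩
  · have hm : Measurable fun x => fderiv ℝ f x (ei i) := measurable_fderiv_apply_const ℝ _ _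
    rw [memLp_two_iff_integrable_sq hm.aestronglyMeasurable]
    refine h2.mono' (hm.pow_const 2).aestronglyMeasurable (Filter.Eventually.of_forall fun x => ?_)
    rw [Real.norm_of_nonneg (sq_nonneg _), ← sum_grad, sq]
    exact Finset.single_le_sum (f := fun i => fderiv ℝ f x (ei i) * fderiv ℝ f x (ei i))
      (fun i _ => mul_self_nonneg _) (Finset.mem_univ i)
  · have cq : Continuous fun x => f x / qq x :=
      h1.continuous.div cont_qq fun x => (qq_pos x).ne'
    rw [memLp_two_iff_integrable_sq cq.aestronglyMeasurable]
    refine hL2.congr (Filter.Eventually.of_forall fun x => ?_)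
    simp only [qq, div_pow]
  · set p : ℝ := 2 * (d : ℝ) / ((d : ℝ) - 2) with hp
    set p' : ℝ := 2 * (d : ℝ) / ((d : ℝ) + 2) with hp'
    have hm2 : (0 : ℝ) < d - 2 := by linarith
    have hp0 : 0 < p := by positivity
    have hp0' : 0 < p' := by positivity
    have hconj : p.HolderConjugate p' := by
      rw [Real.holderConjugate_iff]
      refine ⟨?_, ?_⟩
      · rw [hp, lt_div_iff₀ hm2]; linarith
      · rw [hp, hp']; field_simp; ring
    have hc := hconj.ennrealOfReal
    have m1 : MemLp f (ENNReal.ofReal p) volume := by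
      rw [← integrable_norm_rpow_iff h1.continuous.aestronglyMeasurable
        (by simpa using hp0) ENNReal.ofReal_ne_top, ENNReal.toReal_ofReal hp0.le]
      exact h3
    have m2 : MemLp (vv (d := d)) (ENNReal.ofReal p') volume := by
      rw [← integrable_norm_rpow_iff cont_vv.aestronglyMeasurable
        (by simpa using hp0') ENNReal.ofReal_ne_top, ENNReal.toReal_ofReal hp0'.le]
      have := integrable_qq_rpow (d := d) (r := (d : ℝ) / 2 * p') (by
        rw [hp']
        have : 2 * ((d : ℝ) / 2 * (2 * d / (d + 2))) = d * (2 * d / (d + 2)) := by ring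
        rw [this]
        have : 1 < 2 * (d : ℝ) / (d + 2) := by rw [lt_div_iff₀ (by linarith)]; linarith
        nlinarith)
      refine this.congr (Filter.Eventually.of_forall fun x => ?_)
      simp only
      rw [Real.norm_of_nonneg (vv_pos x).le, vv, ← Real.rpow_mul (qq_pos x).le]
      congr 1; ring
    exact m1.integrable_mul m2

lemma lam_strictMono (hd : 3 ≤ d) : StrictMono (lam d) := by
  intro j k h
  have := mu_lt (d := d) (by omega) h
  unfold lam
  linarith

lemma lam_two : lam d 2 = ((d : ℝ) + 2) * ((d : ℝ) + 4) := by
  unfold lam mu; push_cast; ring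

lemma gap_adm (hd : 3 ≤ d) (f : adm d)
    (o1 : (∫ x, f.1 x * uAT d x / (1 + ‖x‖ ^ 2) ^ 2) = 0)
    (o2 : (∫ x, f.1 x * (1 - ‖x‖ ^ 2) * uAT d x / (1 + ‖x‖ ^ 2) ^ 3) = 0)
    (o3 : ∀ i : Fin d, (∫ x, f.1 x * x i * uAT d x / (1 + ‖x‖ ^ 2) ^ 3) = 0) :
    lam d 2 * BB d f f ≤ QQ d f f := by
  have l2 : 0 < lam d 2 := by rw [lam_two]; positivity
  refine le_of_forall_pos_le_add fun ε hε => ?_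
  obtain ⟨s, ψ, hψ, hlt⟩ := approx_VV hd f (div_pos hε l2)
  have := abstract_gap (QQ d) (BB d)
    (fun f g => by
      change (∑ i, ∫ x, fderiv ℝ f.1 x (ei i) * fderiv ℝ g.1 x (ei i)) =
        ∑ i, ∫ x, fderiv ℝ g.1 x (ei i) * fderiv ℝ f.1 x (ei i)
      simp only [mul_comm])
    (fun f g => by
      change (∫ x, (f.1 x / qq x) * (g.1 x / qq x)) = ∫ x, (g.1 x / qq x) * (f.1 x / qq x)
      simp only [mul_comm])
    (fun f => show 0 ≤ ∑ i, ∫ x, fderiv ℝ f.1 x (ei i) * fderiv ℝ f.1 x (ei i) from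
      Finset.sum_nonneg fun i _ => integral_nonneg fun x => mul_self_nonneg _)
    (fun f => show 0 ≤ ∫ x, (f.1 x / qq x) * (f.1 x / qq x) from
      integral_nonneg fun x => mul_self_nonneg _)
    (lam d) (lam_strictMono hd) l2.le f s ψ (fun k g => weak_VV hd k (hψ k) g)
    (fun k hk => orth_VV hd f o1 o2 o3 k hk (hψ k))
  rw [lt_div_iff₀ l2] at hlt
  linarith

end final

/-- weighted Poincaré inequality on `ℝ^d` for functions orthogonal to the
Aubin–Talenti function and to the images of the degree-one spherical harmonics. -/
theorem weighted_poincare (d : ℕ) (hd : 3 ≤ d)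
    (f : EuclideanSpace ℝ (Fin d) → ℝ) (hf : MemD12 d f)
    (hL2 : Integrable (fun x => f x ^ 2 / (1 + ‖x‖ ^ 2) ^ 2))
    (o1 : (∫ x, f x * uAT d x / (1 + ‖x‖ ^ 2) ^ 2) = 0)
    (o2 : (∫ x, f x * (1 - ‖x‖ ^ 2) * uAT d x / (1 + ‖x‖ ^ 2) ^ 3) = 0)
    (o3 : ∀ i : Fin d, (∫ x, f x * x i * uAT d x / (1 + ‖x‖ ^ 2) ^ 3) = 0) :
    (∫ x, ‖gradient f x‖ ^ 2) ≥
      ((d : ℝ) + 2) * ((d : ℝ) + 4) * ∫ x, f x ^ 2 / (1 + ‖x‖ ^ 2) ^ 2 := by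
  have ha := adm_of_D12 hd hf hL2
  have key := gap_adm hd ⟨f, ha⟩ o1 o2 o3
  have hB : BB d ⟨f, ha⟩ ⟨f, ha⟩ = ∫ x, f x ^ 2 / (1 + ‖x‖ ^ 2) ^ 2 := by
    change (∫ x, (f x / qq x) * (f x / qq x)) = _
    congr 1; funext x
    rw [← show qq x = 1 + ‖x‖ ^ 2 from rfl]
    rw [div_mul_div_comm, sq, sq]
  have hQ : QQ d ⟨f, ha⟩ ⟨f, ha⟩ = ∫ x, ‖gradient f x‖ ^ 2 := by
    change (∑ i, ∫ x, fderiv ℝ f x (ei i) * fderiv ℝ f x (ei i)) = _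
    rw [← integral_finsetSum _ fun i _ => integrable_Q ha ha i]
    simp only [sum_grad]
  rw [hB, hQ, lam_two] at key
  exact key
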